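/- Fix a positive integer d and ℓ = (ℓ_1,...,ℓ_n) ∈ ℕ^n. There exists a nonzero squarefree strongly stable ideal I in K[x_1,...,x_{n+d-1}] generated in degree d with ℓ*(I) = ℓ if and only if ℓ is an M-vector with ℓ_2 ≤ d. -/

import Mathlib

set_option synthInstance.maxHeartbeats 1000000
set_option maxHeartbeats 1000000

open MvPolynomial

namespace Paper

/-! ### Combinatorics of monomials -/

/-- a monomial in `n` variables, encoded by its exponent vector -/
abbrev Mono (n : ℕ) := Fin n →₀ ℕ

/-- total degree of a monomial -/
def mdeg {n : ℕ} (u : Mono n) : ℕ := u.sum fun _ e => e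

/-- `maxVar u` is the largest index (1-indexed) of a variable dividing `u`; `maxVar 1 = 0`. -/
def maxVar {n : ℕ} (u : Mono n) : ℕ := u.support.sup fun i => (i : ℕ) + 1

/-- `LexGT u v` : `u >_lex v` (lexicographic order with `x_1 > x_2 > ⋯ > x_n`). -/
def LexGT {n : ℕ} (u v : Mono n) : Prop :=
  ∃ i : Fin n, v i < u i ∧ ∀ j : Fin n, j < i → u j = v j

/-- strongly stable set of monomials -/
def SStableSet {n : ℕ} (V : Set (Mono n)) : Prop :=
  ∀ u : Mono n, ∀ p q : Fin n, p < q → u + Finsupp.single q 1 ∈ V →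
    u + Finsupp.single p 1 ∈ V

/-- `Dk V k = { u / x_k : u ∈ V, max(u) = k }` (here `k : Fin n` is the 0-indexed variable,
corresponding to the 1-indexed variable `k+1`) -/
def Dk {n : ℕ} (V : Set (Mono n)) (k : Fin n) : Set (Mono n) :=
  {w | w + Finsupp.single k 1 ∈ V ∧ maxVar (w + Finsupp.single k 1) = (k : ℕ) + 1}

/-- `Mle j W = { u ∈ W : max(u) ≤ j }` -/
def Mle {n : ℕ} (j : ℕ) (W : Set (Mono n)) : Set (Mono n) := {u ∈ W | maxVar u ≤ j}

/-- `L` is a lexsegment set of monomials inside `K[x_1,…,x_k]`. -/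
def LexSegIn {n : ℕ} (k : ℕ) (L : Set (Mono n)) : Prop :=
  (∀ u ∈ L, maxVar u ≤ k) ∧
  ∀ u ∈ L, ∀ v : Mono n, mdeg v = mdeg u → maxVar v ≤ k → LexGT v u → v ∈ L

/-- `V` is a `d`-linear lexsegment set of monomials of degree `d`. -/
def DLinearLexSeg {n : ℕ} (d : ℕ) (V : Set (Mono n)) : Prop :=
  (∀ u ∈ V, mdeg u = d) ∧ SStableSet V ∧
    ∀ k : Fin n, LexSegIn ((k : ℕ) + 1) (Dk V k)

/-! ### Ideal-level notions -/

variable {n : ℕ} {K : Type} [Field K]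

/-- `I` is a monomial ideal. -/
def MonomialIdeal (I : Ideal (MvPolynomial (Fin n) K)) : Prop :=
  ∀ p ∈ I, ∀ m ∈ p.support, (monomial m (1 : K)) ∈ I

/-- `u` is a minimal monomial generator of the monomial ideal `I`. -/
def MinGen (I : Ideal (MvPolynomial (Fin n) K)) (u : Mono n) : Prop :=
  monomial u (1 : K) ∈ I ∧ ∀ v : Mono n, v ≤ u → v ≠ u → monomial v (1 : K) ∉ I

/-- stable monomial ideal -/
def StableIdeal (I : Ideal (MvPolynomial (Fin n) K)) : Prop :=
  MonomialIdeal I ∧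
  ∀ u : Mono n, ∀ q : Fin n, maxVar u = (q : ℕ) + 1 → monomial u (1 : K) ∈ I →
    ∀ p : Fin n, p < q →
      monomial (u - Finsupp.single q 1 + Finsupp.single p 1) (1 : K) ∈ I

/-- strongly stable monomial ideal -/
def SStableIdeal (I : Ideal (MvPolynomial (Fin n) K)) : Prop :=
  MonomialIdeal I ∧
  ∀ u : Mono n, ∀ q : Fin n, 0 < u q → monomial u (1 : K) ∈ I →
    ∀ p : Fin n, p < q →
      monomial (u - Finsupp.single q 1 + Finsupp.single p 1) (1 : K) ∈ I

/-- the set of (exponent vectors of) monomials of degree `k` lying in `I` -/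
def monSlice (I : Ideal (MvPolynomial (Fin n) K)) (k : ℕ) : Set (Mono n) :=
  {u | mdeg u = k ∧ monomial u (1 : K) ∈ I}

/-- homogeneous (graded) ideal -/
def HomIdeal (I : Ideal (MvPolynomial (Fin n) K)) : Prop :=
  ∀ p ∈ I, ∀ k : ℕ, homogeneousComponent k p ∈ I

/-! ### Graded components and Hilbert functions -/

/-- the degree-`z` homogeneous component of `I`, as a `K`-subspace -/
noncomputable def hComp (I : Ideal (MvPolynomial (Fin n) K)) (z : ℤ) :
    Submodule K (MvPolynomial (Fin n) K) :=
  if 0 ≤ z then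
    (Submodule.restrictScalars K I) ⊓ homogeneousSubmodule (Fin n) K z.toNat
  else ⊥

/-- Hilbert function `H(I,t)` of the ideal `I` -/
noncomputable def hfI (I : Ideal (MvPolynomial (Fin n) K)) (t : ℕ) : ℕ :=
  Module.finrank K (hComp I (t : ℤ))

/-- Hilbert function `H(S/I,t)` of the quotient `S/I` -/
noncomputable def hfQ (I : Ideal (MvPolynomial (Fin n) K)) (t : ℕ) : ℕ :=
  Module.finrank K
    (homogeneousSubmodule (Fin n) K t ⧸
      Submodule.comap (homogeneousSubmodule (Fin n) K t).subtype
        (Submodule.restrictScalars K I))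

/-- squarefree exponent vector -/
def SqFree {n : ℕ} (u : Mono n) : Prop := ∀ i, u i ≤ 1

/-- squarefree monomial ideal -/
def SqMonomialIdeal (I : Ideal (MvPolynomial (Fin n) K)) : Prop :=
  MonomialIdeal I ∧ ∀ u : Mono n, MinGen I u → SqFree u

/-- squarefree strongly stable ideal -/
def SqSStableIdeal (I : Ideal (MvPolynomial (Fin n) K)) : Prop :=
  SqMonomialIdeal I ∧
  ∀ u : Mono n, SqFree u → monomial u (1 : K) ∈ I →
    ∀ p q : Fin n, p < q → u q = 1 → u p = 0 →
      monomial (u - Finsupp.single q 1 + Finsupp.single p 1) (1 : K) ∈ I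

/-! ### Macaulay operators and M-vectors -/

/-- Macaulay upper operator `a^{⟨t⟩}` (`macUp t a`):
if `a = C(a_t,t) + ⋯ + C(a_j,j)` is the `t`-th Macaulay representation then
`a^{⟨t⟩} = C(a_t+1,t+1) + ⋯ + C(a_j+1,j+1)`; also `0^{⟨t⟩} = 0`. -/
noncomputable def macUp : ℕ → ℕ → ℕ
  | 0, _ => 0
  | _ + 1, 0 => 0
  | (t + 1), (a + 1) =>
    let c := sSup {c : ℕ | Nat.choose c (t + 1) ≤ a + 1}
    Nat.choose (c + 1) (t + 2) + macUp t ((a + 1) - Nat.choose c (t + 1))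

/-- Macaulay operator `a^{(t)}` (`macSq t a`):
if `a = C(a_t,t) + ⋯ + C(a_j,j)` is the `t`-th Macaulay representation then
`a^{(t)} = C(a_t+1,t) + ⋯ + C(a_j+1,j)`; also `0^{(t)} = 0`. -/
noncomputable def macSq : ℕ → ℕ → ℕ
  | 0, _ => 0
  | _ + 1, 0 => 0
  | (t + 1), (a + 1) =>
    let c := sSup {c : ℕ | Nat.choose c (t + 1) ≤ a + 1}
    Nat.choose (c + 1) (t + 1) + macSq t ((a + 1) - Nat.choose c (t + 1))

/-- `(ℓ 0, ℓ 1, …, ℓ (n-1)) = (h_0,…,h_{n-1})` is an M-vector: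
`h_0 = 1` and `h_{t+1} ≤ h_t^{⟨t⟩}` for all `t ≥ 1`. -/
def MVector {n : ℕ} (ℓ : Fin n → ℕ) : Prop :=
  (∀ h0 : 0 < n, ℓ ⟨0, h0⟩ = 1) ∧
  ∀ t : ℕ, 1 ≤ t → ∀ (h1 : t < n) (h2 : t + 1 < n),
    ℓ ⟨t + 1, h2⟩ ≤ macUp t (ℓ ⟨t, h1⟩)

/-! ### Arithmetic of the Macaulay operator -/

theorem macUp_zero_right (t : ℕ) : macUp t 0 = 0 := by
  cases t <;> simp [macUp]

theorem macUp_choose_add {t c r : ℕ} (hr : r < Nat.choose c t) :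
    macUp (t + 1) (Nat.choose c (t + 1) + r) = Nat.choose (c + 1) (t + 2) + macUp t r := by
  have htc : t ≤ c := by
    by_contra h
    rw [Nat.choose_eq_zero_of_lt (by omega)] at hr
    omega
  rcases Nat.eq_zero_or_pos (Nat.choose c (t + 1) + r) with h0 | h0
  · have hr0 : r = 0 := by omega
    have hc0 : Nat.choose c (t + 1) = 0 := by omega
    have hct : c < t + 1 := Nat.choose_eq_zero_iff.mp hc0
    rw [h0, hr0, macUp_zero_right, macUp_zero_right, Nat.choose_eq_zero_of_lt (by omega)]
  · obtain ⟨a, ha⟩ : ∃ a, Nat.choose c (t + 1) + r = a + 1 := ⟨_, (Nat.succ_pred h0.ne').symm⟩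
    have hs : sSup {x : ℕ | Nat.choose x (t + 1) ≤ a + 1} = c := by
      apply IsGreatest.csSup_eq
      refine ⟨by simp only [Set.mem_ofPred_eq]; omega, fun x hx => ?_⟩
      by_contra hxc
      have h1 : Nat.choose (c + 1) (t + 1) ≤ Nat.choose x (t + 1) :=
        Nat.choose_le_choose _ (by omega)
      have h2 := Nat.choose_succ_succ' c t
      simp only [Set.mem_ofPred_eq] at hx
      omega
    rw [ha, macUp]
    simp only [hs]
    congr 2
    omega

theorem exists_choose_add (t a : ℕ) :
    ∃ c r, r < Nat.choose c t ∧ a = Nat.choose c (t + 1) + r := by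
  induction a with
  | zero => exact ⟨t, 0, by simp, by simp⟩
  | succ a ih =>
    obtain ⟨c, r, hr, rfl⟩ := ih
    by_cases h : r + 1 < Nat.choose c t
    · exact ⟨c, r + 1, h, by omega⟩
    · refine ⟨c + 1, 0, ?_, ?_⟩
      · exact lt_of_lt_of_le (by omega) (Nat.choose_le_choose t (Nat.le_succ c))
      · have := Nat.choose_succ_succ' c t
        omega

theorem macUp_choose (t c : ℕ) :
    macUp (t + 1) (Nat.choose c (t + 1)) = Nat.choose (c + 1) (t + 2) := by
  by_cases h : 0 < Nat.choose c t
  · simpa [macUp_zero_right] using macUp_choose_add h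
  · have hct : c < t := Nat.choose_eq_zero_iff.mp (by omega)
    rw [Nat.choose_eq_zero_of_lt (by omega), macUp_zero_right,
      Nat.choose_eq_zero_of_lt (by omega)]

theorem macUp_choose_add_of_le {t c r : ℕ} (hr : r ≤ Nat.choose c (t + 1)) :
    macUp (t + 2) (Nat.choose c (t + 2) + r) =
      Nat.choose (c + 1) (t + 3) + macUp (t + 1) r := by
  rcases hr.lt_or_eq with h | rfl
  · exact macUp_choose_add h
  · have h1 := Nat.choose_succ_succ' c (t + 1)
    have h2 := Nat.choose_succ_succ' (c + 1) (t + 2)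
    simp only [Nat.add_assoc, Nat.reduceAdd] at h1 h2
    rw [add_comm (Nat.choose c (t + 2)), ← h1, macUp_choose, macUp_choose, h2, add_comm]

theorem macUp_one (a : ℕ) : macUp 1 a = Nat.choose (a + 1) 2 := by
  simpa using macUp_choose 0 a

theorem macUp_strictMono (t : ℕ) : StrictMono (macUp (t + 1)) := by
  induction t with
  | zero =>
    refine strictMono_nat_of_lt_succ fun a => ?_
    rw [zero_add, macUp_one, macUp_one, Nat.choose_succ_succ' (a + 1) 1]
    simp
  | succ t ih =>
    intro a a' haa'
    obtain ⟨c, r, hr, rfl⟩ := exists_choose_add (t + 1) a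
    obtain ⟨c', r', hr', rfl⟩ := exists_choose_add (t + 1) a'
    rw [macUp_choose_add hr, macUp_choose_add hr']
    simp only [Nat.add_assoc, Nat.reduceAdd] at *
    rcases lt_trichotomy c c' with h | h | h
    · have h1 := ih hr
      rw [macUp_choose] at h1
      have h2 := Nat.choose_succ_succ' (c + 1) (t + 2)
      have h3 : Nat.choose (c + 2) (t + 3) ≤ Nat.choose (c' + 1) (t + 3) :=
        Nat.choose_le_choose _ (by omega)
      simp only [Nat.add_assoc, Nat.reduceAdd] at *
      omega
    · subst h
      have := ih (show r < r' by omega)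
      omega
    · have h1 := Nat.choose_succ_succ' c' (t + 1)
      have h3 : Nat.choose (c' + 1) (t + 2) ≤ Nat.choose c (t + 2) :=
        Nat.choose_le_choose _ (by omega)
      simp only [Nat.add_assoc, Nat.reduceAdd] at *
      omega

/-- The number `g` is the value at `a` of the Green operator `a_{⟨t+1⟩}`. -/
theorem exists_green (t a : ℕ) :
    ∃ g ≤ a, macUp (t + 1) a = a + macUp (t + 1) g ∧
      (∀ x, x + g < a → macUp t x < a) ∧ (t = 0 → g = a - 1) ∧
      ∀ c, a ≤ Nat.choose c (t + 1) → g ≤ Nat.choose (c - 1) (t + 1) := by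
  induction t generalizing a with
  | zero =>
    refine ⟨a - 1, by omega, ?_, fun x hx => ?_, fun _ => rfl, fun c hc => ?_⟩
    · rw [zero_add, macUp_one, macUp_one]
      cases a with
      | zero => simp
      | succ a => simp [Nat.choose_succ_succ' (a + 1) 1]
    · simp only [macUp]
      omega
    · simp only [zero_add, Nat.choose_one_right] at hc ⊢
      omega
  | succ t ih =>
    obtain ⟨c, r, hr, rfl⟩ := exists_choose_add (t + 1) a
    obtain ⟨g, hgr, hg1, hg2, hg3, hg4⟩ := ih r
    obtain ⟨c, rfl⟩ : ∃ c', c = c' + 1 := by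
      cases c with
      | zero => simp at hr
      | succ c => exact ⟨c, rfl⟩
    have hgc : g ≤ Nat.choose c (t + 1) := hg4 _ hr.le
    have p1 := Nat.choose_succ_succ' c (t + 1)
    have p0 := Nat.choose_succ_succ' c t
    simp only [Nat.add_assoc, Nat.reduceAdd] at p0 p1
    simp only [Nat.add_assoc, Nat.reduceAdd]
    refine ⟨Nat.choose c (t + 2) + g, by omega, ?_, fun x hx => ?_, by omega, fun c' hc' => ?_⟩
    · rw [macUp_choose_add hr, macUp_choose_add_of_le hgc, hg1,
        Nat.choose_succ_succ' (c + 1) (t + 2)]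
      simp only [Nat.add_assoc, Nat.reduceAdd] at *
      omega
    · by_cases hxc : x < Nat.choose c (t + 1)
      · have := macUp_strictMono t hxc
        rw [macUp_choose] at this
        omega
      · obtain ⟨y, rfl⟩ := Nat.exists_eq_add_of_le (not_lt.mp hxc)
        have hy : macUp t y < r := hg2 y (by omega)
        have key : y < Nat.choose c t := by
          cases t with
          | zero =>
            have := hg3 rfl
            simp only [Nat.choose_zero_right]
            omega
          | succ t =>
            by_contra hcon
            have := (macUp_strictMono t).monotone (not_lt.mp hcon)
            rw [macUp_choose] at this
            simp only [Nat.add_assoc, Nat.reduceAdd] at *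
            omega
        rw [macUp_choose_add key]
        omega
    · rcases Nat.lt_or_ge (c + 1) c' with h | h
      · have : Nat.choose (c + 1) (t + 2) ≤ Nat.choose (c' - 1) (t + 2) :=
          Nat.choose_le_choose _ (by omega)
        omega
      · have h1 : Nat.choose c' (t + 2) ≤ Nat.choose (c + 1) (t + 2) :=
          Nat.choose_le_choose _ h
        have hr0 : r = 0 := by omega
        rcases h.lt_or_eq with h' | rfl
        · have h2 : Nat.choose c' (t + 2) ≤ Nat.choose c (t + 2) :=
            Nat.choose_le_choose _ (by omega)
          have h3 : Nat.choose c (t + 1) = 0 := by omega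
          have h4 := Nat.choose_eq_zero_iff.mp h3
          have h5 : Nat.choose c (t + 2) = 0 := Nat.choose_eq_zero_of_lt (by omega)
          have h6 := Nat.zero_le (Nat.choose (c' - 1) (t + 2))
          omega
        · simp only [Nat.add_sub_cancel] at *
          omega

/-! ### Upper bound for families of sets closed under raising elements -/

/-- The sets `U ⊆ {0, …, M}` such that removing the maximum of `U` gives a member of `B`. -/
def maxExt (M : ℕ) (B : Finset (Finset ℕ)) : Finset (Finset ℕ) :=
  (Finset.range (M + 1)).powerset.filter fun U =>
    ∃ x ∈ U, (∀ y ∈ U, y ≤ x) ∧ U.erase x ∈ B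

theorem mem_maxExt {M : ℕ} {B : Finset (Finset ℕ)} {U : Finset ℕ} :
    U ∈ maxExt M B ↔ (∀ x ∈ U, x ≤ M) ∧ ∃ x ∈ U, (∀ y ∈ U, y ≤ x) ∧ U.erase x ∈ B := by
  simp [maxExt, Finset.subset_iff]

/-- Closure under replacing an element by a larger element of `{0, …, M - 1}`. -/
def RaiseClosed (M : ℕ) (B : Finset (Finset ℕ)) : Prop :=
  ∀ T ∈ B, ∀ p ∈ T, ∀ q, p < q → q < M → q ∉ T → insert q (T.erase p) ∈ B

theorem card_maxExt_le {M t : ℕ} {B : Finset (Finset ℕ)}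
    (hB : B ⊆ Finset.powersetCard (t + 1) (Finset.range M)) (hc : RaiseClosed M B) :
    (maxExt M B).card ≤ macUp (t + 1) B.card := by
  induction M generalizing t B with
  | zero =>
    have hB' : B = ∅ := by
      rwa [Finset.powersetCard_eq_empty.mpr (by simp), Finset.subset_empty] at hB
    have : maxExt 0 B = ∅ := by
      ext U
      simp [mem_maxExt, hB']
    simp [this]
  | succ M ih =>
    have hBlt : ∀ T ∈ B, ∀ x ∈ T, x < M + 1 := fun T hT x hx =>
      Finset.mem_range.mp ((Finset.mem_powersetCard.mp (hB hT)).1 hx)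
    have hBcard : ∀ T ∈ B, T.card = t + 1 := fun T hT => (Finset.mem_powersetCard.mp (hB hT)).2
    set B₀ := B.filter fun T => M ∉ T with hB₀
    set B₁ := (Finset.range M).powerset.filter fun T => insert M T ∈ B with hB₁
    have hcard : B₁.card + B₀.card = B.card := by
      have himg : B.filter (fun T => M ∈ T) = B₁.image (insert M) := by
        ext T
        simp only [hB₁, Finset.mem_filter, Finset.mem_image, Finset.mem_powerset]
        constructor
        · rintro ⟨hT, hM⟩
          refine ⟨T.erase M, ⟨fun x hx => ?_, ?_⟩, Finset.insert_erase hM⟩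
          · have h1 := hBlt T hT x (Finset.mem_of_mem_erase hx)
            have h2 := Finset.ne_of_mem_erase hx
            exact Finset.mem_range.mpr (by omega)
          · rwa [Finset.insert_erase hM]
        · rintro ⟨T', ⟨-, hT'⟩, rfl⟩
          exact ⟨hT', Finset.mem_insert_self _ _⟩
      have hinj : (B₁.image (insert M)).card = B₁.card := by
        refine Finset.card_image_of_injOn fun T hT T' hT' h => ?_
        simp only [hB₁, Finset.coe_filter, Finset.mem_powerset, Set.mem_ofPred_eq] at hT hT'
        have h1 : M ∉ T := fun hm => by simpa using hT.1 hm
        have h2 : M ∉ T' := fun hm => by simpa using hT'.1 hm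
        rw [← Finset.erase_insert h1, ← Finset.erase_insert h2]
        exact congrArg (fun s => s.erase M) h
      rw [← hinj, ← himg, hB₀]
      exact Finset.card_filter_add_card_filter_not _
    have hB₀sub : B₀ ⊆ Finset.powersetCard (t + 1) (Finset.range M) := by
      intro T hT
      simp only [hB₀, Finset.mem_filter] at hT
      refine Finset.mem_powersetCard.mpr ⟨fun x hx => ?_, hBcard T hT.1⟩
      have h1 := hBlt T hT.1 x hx
      have h2 : x ≠ M := fun h => hT.2 (h ▸ hx)
      exact Finset.mem_range.mpr (by omega)
    have hB₁sub : B₁ ⊆ Finset.powersetCard t (Finset.range M) := by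
      intro T hT
      simp only [hB₁, Finset.mem_filter, Finset.mem_powerset] at hT
      have hM : M ∉ T := fun hm => by simpa using hT.1 hm
      have := hBcard _ hT.2
      rw [Finset.card_insert_of_notMem hM] at this
      exact Finset.mem_powersetCard.mpr ⟨hT.1, by omega⟩
    have hc₀ : RaiseClosed M B₀ := by
      intro T hT p hp q hpq hq hqT
      simp only [hB₀, Finset.mem_filter] at hT ⊢
      refine ⟨hc T hT.1 p hp q hpq (by omega) hqT, ?_⟩
      simp only [Finset.mem_insert, Finset.mem_erase, not_or, not_and]
      exact ⟨by omega, fun _ => hT.2⟩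
    have hc₁ : RaiseClosed M B₁ := by
      intro T hT p hp q hpq hq hqT
      simp only [hB₁, Finset.mem_filter, Finset.mem_powerset] at hT ⊢
      constructor
      · intro x hx
        rcases Finset.mem_insert.mp hx with rfl | hx
        · simpa using hq
        · exact hT.1 (Finset.mem_of_mem_erase hx)
      · have hpM : M ≠ p := by omega
        have := hc _ hT.2 p (Finset.mem_insert_of_mem hp) q hpq (by omega)
          (by simp only [Finset.mem_insert, not_or]; exact ⟨by omega, hqT⟩)
        rwa [Finset.erase_insert_of_ne hpM, Finset.insert_comm] at this
    have hBB₁ : B ⊆ maxExt M B₁ := by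
      intro T hT
      have hne : T.Nonempty := Finset.card_pos.mp (by rw [hBcard T hT]; omega)
      have hx := T.max'_mem hne
      have hmax : ∀ y ∈ T, y ≤ T.max' hne := fun y hy => T.le_max' y hy
      set x := T.max' hne
      refine mem_maxExt.mpr ⟨fun y hy => Nat.lt_succ_iff.mp (hBlt T hT y hy), x, hx, hmax, ?_⟩
      simp only [hB₁, Finset.mem_filter, Finset.mem_powerset]
      have hxM := hBlt T hT x hx
      constructor
      · intro y hy
        have h1 := hmax y (Finset.mem_of_mem_erase hy)
        have h2 := Finset.ne_of_mem_erase hy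
        exact Finset.mem_range.mpr (by omega)
      · by_cases hMx : M = x
        · rwa [hMx, Finset.insert_erase hx]
        · exact hc T hT x hx M (by omega) (by omega) fun hMT => by
            have := hmax M hMT
            omega
    have hext : maxExt (M + 1) B ⊆ B.image (insert (M + 1)) ∪ maxExt M B₀ := by
      intro U hU
      obtain ⟨hUM, x, hx, hmax, hUB⟩ := mem_maxExt.mp hU
      by_cases hxM : x = M + 1
      · exact Finset.mem_union_left _
          (Finset.mem_image.mpr ⟨_, hUB, by rw [← hxM, Finset.insert_erase hx]⟩)
      · have hxM' := hUM x hx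
        refine Finset.mem_union_right _
          (mem_maxExt.mpr ⟨fun y hy => ?_, x, hx, hmax, Finset.mem_filter.mpr ⟨hUB, fun hM => ?_⟩⟩)
        · have := hmax y hy
          omega
        · have h1 := hmax M (Finset.mem_of_mem_erase hM)
          have h2 := Finset.ne_of_mem_erase hM
          omega
    obtain ⟨g, -, hg1, hg2, hg3, -⟩ := exists_green t B.card
    have hg : B₀.card ≤ g := by
      by_contra hlt
      have h := hg2 B₁.card (by omega)
      cases t with
      | zero =>
        have hg0 := hg3 rfl
        have hB₁0 : B₁ = ∅ := Finset.card_eq_zero.mp (by omega)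
        have : B = ∅ := by
          refine Finset.eq_empty_of_forall_notMem fun T hT => ?_
          obtain ⟨-, x, -, -, h⟩ := mem_maxExt.mp (hBB₁ hT)
          simp [hB₁0] at h
        simp [this] at h
      | succ t =>
        have h1 := ih hB₁sub hc₁
        have h2 := Finset.card_le_card hBB₁
        omega
    have h1 := Finset.card_le_card hext
    have h2 := Finset.card_union_le (B.image (insert (M + 1))) (maxExt M B₀)
    have h3 : (B.image (insert (M + 1))).card ≤ B.card := Finset.card_image_le
    have h4 := ih hB₀sub hc₀
    have h5 := (macUp_strictMono t).monotone hg
    omega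

/-! ### The combinatorial number system -/

/-- The number `∑ C(cᵢ, i)` represented by a set `{c₁ < ⋯ < c_t}`. -/
def cns (T : Finset ℕ) : ℕ := ∑ x ∈ T, Nat.choose x (T.filter (· ≤ x)).card

theorem cns_insert_max {T : Finset ℕ} {x : ℕ} (hx : ∀ y ∈ T, y < x) :
    cns (insert x T) = Nat.choose x (T.card + 1) + cns T := by
  have hxT : x ∉ T := fun h => (hx x h).false
  rw [cns, Finset.sum_insert hxT]
  congr 1
  · rw [Finset.filter_true_of_mem, Finset.card_insert_of_notMem hxT]
    simpa using fun y hy => (hx y hy).le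
  · refine Finset.sum_congr rfl fun y hy => ?_
    rw [Finset.filter_insert, if_neg (not_le.mpr (hx y hy))]

theorem cns_lt {T : Finset ℕ} {c : ℕ} (hT : ∀ y ∈ T, y < c) :
    cns T < Nat.choose c T.card := by
  induction T using Finset.induction_on_max generalizing c with
  | empty => simp [cns]
  | insert x T hx ih =>
    have hxT : x ∉ T := fun h => (hx x h).false
    rw [cns_insert_max hx, Finset.card_insert_of_notMem hxT]
    have h1 := ih hx
    have h2 := Nat.choose_succ_succ' x T.card
    have h3 : Nat.choose (x + 1) (T.card + 1) ≤ Nat.choose c (T.card + 1) :=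
      Nat.choose_le_choose _ (hT x (Finset.mem_insert_self _ _))
    omega

theorem macUp_cns (T : Finset ℕ) :
    macUp T.card (cns T) =
      ∑ x ∈ T, Nat.choose (x + 1) ((T.filter (· ≤ x)).card + 1) := by
  induction T using Finset.induction_on_max with
  | empty => simp [cns, macUp]
  | insert x T hx ih =>
    have hxT : x ∉ T := fun h => (hx x h).false
    rw [cns_insert_max hx, Finset.card_insert_of_notMem hxT, macUp_choose_add (cns_lt hx), ih,
      Finset.sum_insert hxT]
    congr 1
    · rw [Finset.filter_true_of_mem, Finset.card_insert_of_notMem hxT]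
      simpa using fun y hy => (hx y hy).le
    · refine Finset.sum_congr rfl fun y hy => ?_
      rw [Finset.filter_insert, if_neg (not_le.mpr (hx y hy))]

theorem cns_insert_zero_image_succ (T : Finset ℕ) :
    cns (insert 0 (T.image Nat.succ)) = macUp T.card (cns T) := by
  rw [macUp_cns, cns, Finset.sum_insert (by simp)]
  have h0 : Nat.choose 0 ((insert 0 (T.image Nat.succ)).filter (· ≤ 0)).card = 0 := by
    rw [Finset.filter_insert, if_pos le_rfl, Finset.card_insert_of_notMem (by simp)]
    simp
  rw [h0, zero_add, Finset.sum_image (fun _ _ _ _ h => Nat.succ_injective h)]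
  refine Finset.sum_congr rfl fun x _ => ?_
  rw [Finset.filter_insert, if_pos (Nat.zero_le _), Finset.card_insert_of_notMem (by simp),
    Finset.filter_image, Finset.card_image_of_injective _ Nat.succ_injective]
  simp

theorem cns_lower_le {T : Finset ℕ} {c : ℕ} (h1 : c + 1 ∈ T) (h0 : c ∉ T) :
    cns (insert c (T.erase (c + 1))) ≤ cns T := by
  obtain ⟨T₀, hT₀, rfl⟩ : ∃ T₀, c + 1 ∉ T₀ ∧ T = insert (c + 1) T₀ :=
    ⟨T.erase (c + 1), Finset.notMem_erase _ _, (Finset.insert_erase h1).symm⟩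
  have hc : c ∉ T₀ := fun h => h0 (Finset.mem_insert_of_mem h)
  rw [Finset.erase_insert hT₀, cns, cns, Finset.sum_insert hc, Finset.sum_insert hT₀]
  have hfil : T₀.filter (· ≤ c + 1) = T₀.filter (· ≤ c) := by
    refine Finset.filter_congr fun x hx => ?_
    have : x ≠ c + 1 := fun h => hT₀ (h ▸ hx)
    omega
  refine add_le_add ?_ (Finset.sum_le_sum fun x hx => ?_)
  · rw [Finset.filter_insert, Finset.filter_insert, if_pos le_rfl, if_pos le_rfl, hfil,
      Finset.card_insert_of_notMem (by simp [hc]), Finset.card_insert_of_notMem (by simp)]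
    exact Nat.choose_le_choose _ (Nat.le_succ c)
  · have hx1 : x ≠ c := fun h => hc (h ▸ hx)
    apply le_of_eq
    congr 1
    rw [Finset.filter_insert, Finset.filter_insert]
    by_cases hcx : c + 1 ≤ x
    · rw [if_pos hcx, if_pos (by omega), Finset.card_insert_of_notMem (by simp [hc]),
        Finset.card_insert_of_notMem (by simp [hT₀])]
    · rw [if_neg hcx, if_neg (by omega)]

theorem card_cns_lt {M t a : ℕ} (ha : a ≤ Nat.choose M t) :
    ((Finset.powersetCard t (Finset.range M)).filter fun T => cns T < a).card = a := by
  induction M generalizing t a with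
  | zero =>
    cases t with
    | zero =>
      simp only [Nat.choose_self] at ha
      interval_cases a <;> simp [cns, Finset.filter_singleton]
    | succ t =>
      simp only [Nat.choose_zero_succ] at ha
      simp [Nat.le_zero.mp ha]
  | succ M ih =>
    cases t with
    | zero =>
      simp only [Nat.choose_zero_right] at ha
      interval_cases a <;> simp [cns, Finset.filter_singleton]
    | succ t =>
      have hlt : ∀ r, ∀ T ∈ Finset.powersetCard r (Finset.range M),
          (∀ y ∈ T, y < M) ∧ T.card = r := fun r T hT =>
        ⟨fun y hy => Finset.mem_range.mp ((Finset.mem_powersetCard.mp hT).1 hy),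
          (Finset.mem_powersetCard.mp hT).2⟩
      have hnot : ∀ r, ∀ T ∈ Finset.powersetCard r (Finset.range M), M ∉ T :=
        fun r T hT h => ((hlt r T hT).1 M h).false
      rw [Finset.range_add_one, Finset.powersetCard_succ_insert Finset.notMem_range_self,
        Finset.filter_union, Finset.card_union_of_disjoint, Finset.filter_image,
        Finset.card_image_of_injOn]
      · have e1 : (Finset.powersetCard (t + 1) (Finset.range M)).filter (fun T => cns T < a) =
            (Finset.powersetCard (t + 1) (Finset.range M)).filter
              (fun T => cns T < min a (Nat.choose M (t + 1))) := by
          refine Finset.filter_congr fun T hT => ?_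
          obtain ⟨h1, h2⟩ := hlt _ T hT
          have := cns_lt h1
          rw [h2] at this
          omega
        have e2 : (Finset.powersetCard t (Finset.range M)).filter
              (fun T => cns (insert M T) < a) =
            (Finset.powersetCard t (Finset.range M)).filter
              (fun T => cns T < a - Nat.choose M (t + 1)) := by
          refine Finset.filter_congr fun T hT => ?_
          obtain ⟨h1, h2⟩ := hlt _ T hT
          rw [cns_insert_max h1, h2]
          omega
        rw [e1, e2, ih (min_le_right _ _), ih (by rw [Nat.choose_succ_succ'] at ha; omega)]
        omega
      · intro T hT T' hT' h
        simp only [Finset.coe_filter, Set.mem_ofPred_eq] at hT hT'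
        rw [← Finset.erase_insert (hnot _ T hT.1), ← Finset.erase_insert (hnot _ T' hT'.1)]
        exact congrArg (fun s => s.erase M) h
      · refine Finset.disjoint_left.mpr fun T hT hT' => ?_
        obtain ⟨T', -, rfl⟩ := Finset.mem_image.mp (Finset.mem_filter.mp hT').1
        exact hnot _ _ (Finset.mem_filter.mp hT).1 (Finset.mem_insert_self _ _)

/-! ### Families of sets closed under lowering elements -/

/-- Closure under replacing an element by a smaller one. -/
def LowerClosed (G : Finset (Finset ℕ)) : Prop :=
  ∀ S ∈ G, ∀ p q, p < q → q ∈ S → p ∉ S → insert p (S.erase q) ∈ G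

theorem lowerClosed_of_adjacent {G : Finset (Finset ℕ)}
    (h : ∀ S ∈ G, ∀ p, p + 1 ∈ S → p ∉ S → insert p (S.erase (p + 1)) ∈ G) :
    LowerClosed G := by
  intro S hS p q hpq
  obtain ⟨m, rfl⟩ := Nat.exists_eq_add_of_lt hpq
  clear hpq
  induction m generalizing S with
  | zero => exact h S hS p
  | succ m ih =>
    intro hq hp
    by_cases hm : p + m + 1 ∈ S
    · have h1 := ih S hS hm hp
      have h2 := h _ h1 (p + m + 1)
        (by
          simp only [Finset.mem_insert, Finset.mem_erase]
          exact Or.inr ⟨by omega, hq⟩)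
        (by
          simp only [Finset.mem_insert, Finset.mem_erase]
          omega)
      convert h2 using 1
      ext x
      simp only [Finset.mem_insert, Finset.mem_erase]
      by_cases hx : x = p + m + 1
      · subst hx
        simp only [hm, and_true, true_or, iff_true]
        omega
      · simp only [hx, false_or, ne_eq, not_false_eq_true, true_and]
        by_cases hx' : x = p
        · subst hx'
          simp only [true_or, and_true, true_iff]
          omega
        · simp only [hx', false_or]
          rfl
    · have h1 := h S hS (p + m + 1) hq hm
      have h2 := ih _ h1 (Finset.mem_insert_self _ _)
        (by
          simp only [Finset.mem_insert, Finset.mem_erase, not_or, not_and]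
          exact ⟨by omega, fun _ => hp⟩)
      rwa [Finset.erase_insert (by simp [hm])] at h2

/-- The positions of the gaps of `S` in `{0, …, M - 1}`, counted from the top. -/
def gaps (M : ℕ) (S : Finset ℕ) : Finset ℕ :=
  (Finset.range M).filter fun c => M - (c + 1) ∉ S

theorem mem_gaps {M c : ℕ} {S : Finset ℕ} : c ∈ gaps M S ↔ c < M ∧ M - (c + 1) ∉ S := by
  simp [gaps]

theorem gaps_gaps {M : ℕ} {T : Finset ℕ} (hT : ∀ x ∈ T, x < M) : gaps M (gaps M T) = T := by
  ext c
  simp only [mem_gaps, not_and, not_not]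
  constructor
  · rintro ⟨h1, h2⟩
    have := h2 (by omega)
    rwa [show M - (M - (c + 1) + 1) = c by omega] at this
  · intro hc
    have := hT c hc
    refine ⟨this, fun _ => ?_⟩
    rwa [show M - (M - (c + 1) + 1) = c by omega]

theorem card_gaps {M : ℕ} {T : Finset ℕ} (hT : ∀ x ∈ T, x < M) :
    (gaps M T).card + T.card = M := by
  have h : (gaps M T).card = (Finset.range M \ T).card := by
    refine Finset.card_nbij' (fun c => M - (c + 1)) (fun c => M - (c + 1)) ?_ ?_ ?_ ?_
    · intro c hc
      have := mem_gaps.mp hc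
      have hlt : M - (c + 1) < M := by omega
      exact Finset.mem_sdiff.mpr ⟨Finset.mem_range.mpr hlt, this.2⟩
    · intro c hc
      have h1 := Finset.mem_sdiff.mp hc
      have h2 := Finset.mem_range.mp h1.1
      have hlt : M - (c + 1) < M := by omega
      refine mem_gaps.mpr ⟨hlt, ?_⟩
      rw [show M - (M - (c + 1) + 1) = c by omega]
      exact h1.2
    · intro c hc
      have := mem_gaps.mp hc
      simp only
      omega
    · intro c hc
      have h2 := Finset.mem_range.mp (Finset.mem_sdiff.mp hc).1
      simp only
      omega
  have hsub : T ⊆ Finset.range M := fun x hx => Finset.mem_range.mpr (hT x hx)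
  have := Finset.card_sdiff_add_card_eq_card hsub
  rw [Finset.card_range] at this
  omega

theorem gaps_insert {M m : ℕ} {S : Finset ℕ} (hm : M ≤ m) : gaps M (insert m S) = gaps M S := by
  ext c
  simp only [mem_gaps, Finset.mem_insert, not_or]
  constructor
  · exact fun h => ⟨h.1, h.2.2⟩
  · exact fun h => ⟨h.1, by omega, h.2⟩

theorem gaps_erase {M m : ℕ} {S : Finset ℕ} (hm : M ≤ m) : gaps M (S.erase m) = gaps M S := by
  ext c
  simp only [mem_gaps, Finset.mem_erase, not_and]
  constructor
  · exact fun h => ⟨h.1, h.2 (by omega)⟩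
  · exact fun h => ⟨h.1, fun _ => h.2⟩

theorem gaps_succ {M : ℕ} {S : Finset ℕ} (hM : M ∉ S) :
    gaps (M + 1) S = insert 0 ((gaps M S).image Nat.succ) := by
  ext c
  cases c with
  | zero => simp [mem_gaps, hM]
  | succ c => simp [mem_gaps]

theorem cns_gaps_lower_le {M p : ℕ} {S : Finset ℕ} (hpM : p + 1 < M) (h1 : p + 1 ∈ S)
    (h0 : p ∉ S) : cns (gaps M (insert p (S.erase (p + 1)))) ≤ cns (gaps M S) := by
  obtain ⟨m, rfl⟩ : ∃ m, M = p + 2 + m := Nat.exists_eq_add_of_le hpM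
  have key : gaps (p + 2 + m) (insert p (S.erase (p + 1))) =
      insert m ((gaps (p + 2 + m) S).erase (m + 1)) := by
    ext c
    simp only [mem_gaps, Finset.mem_insert, Finset.mem_erase, not_or, not_and]
    by_cases hc : c = m
    · subst hc
      rw [show p + 2 + c - (c + 1) = p + 1 by omega]
      simp only [true_or, iff_true]
      omega
    · by_cases hc' : c = m + 1
      · subst hc'
        rw [show p + 2 + m - (m + 1 + 1) = p by omega]
        simp
      · simp only [hc, hc', false_or, ne_eq, not_false_eq_true, true_and]
        constructor
        · exact fun h => ⟨h.1, h.2.2 (by omega)⟩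
        · exact fun h => ⟨h.1, by omega, fun _ => h.2⟩
  rw [key]
  refine cns_lower_le ?_ ?_
  · rw [mem_gaps, show p + 2 + m - (m + 1 + 1) = p by omega]
    exact ⟨by omega, h0⟩
  · rw [mem_gaps, show p + 2 + m - (m + 1) = p + 1 by omega]
    exact fun h => h.2 h1

/-- The members of `G` whose largest element is `M`. -/
def maxSlice (G : Finset (Finset ℕ)) (M : ℕ) : Finset (Finset ℕ) :=
  G.filter fun S => M ∈ S ∧ ∀ x ∈ S, x ≤ M

theorem mVector_of_lowerClosed {n e : ℕ} {G : Finset (Finset ℕ)} {ℓ : Fin n → ℕ}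
    (hne : G.Nonempty) (hG : G ⊆ Finset.powersetCard (e + 1) (Finset.range (n + e)))
    (hc : LowerClosed G) (hℓ : ∀ k : Fin n, (maxSlice G (k + e)).card = ℓ k) :
    MVector ℓ ∧ ∀ h2 : 1 < n, ℓ ⟨1, h2⟩ ≤ e + 1 := by
  have hGcard : ∀ S ∈ G, S.card = e + 1 := fun S hS => (Finset.mem_powersetCard.mp (hG hS)).2
  let B : ℕ → Finset (Finset ℕ) := fun k =>
    (Finset.powersetCard k (Finset.range (k + e))).filter fun T => Finset.range (k + e + 1) \ T ∈ G
  have memB : ∀ {k T}, T ∈ B k ↔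
      (∀ x ∈ T, x < k + e) ∧ T.card = k ∧ Finset.range (k + e + 1) \ T ∈ G := by
    intro k T
    simp [B, Finset.mem_powersetCard, Finset.subset_iff, and_assoc]
  have hBsub : ∀ k, B k ⊆ Finset.powersetCard k (Finset.range (k + e)) :=
    fun k => Finset.filter_subset _ _
  have hBcard : ∀ k, (maxSlice G (k + e)).card = (B k).card := by
    intro k
    refine Finset.card_nbij' (fun S => Finset.range (k + e + 1) \ S)
      (fun T => Finset.range (k + e + 1) \ T) ?_ ?_ ?_ ?_
    · intro S hS
      obtain ⟨hSG, hM, hmax⟩ := Finset.mem_filter.mp hS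
      have hsub : S ⊆ Finset.range (k + e + 1) := fun x hx => by
        have := hmax x hx
        exact Finset.mem_range.mpr (by omega)
      refine memB.mpr ⟨fun x hx => ?_, ?_, ?_⟩
      · simp only [Finset.mem_sdiff, Finset.mem_range] at hx
        have : x ≠ k + e := fun h => hx.2 (h ▸ hM)
        omega
      · rw [Finset.card_sdiff_of_subset hsub, Finset.card_range, hGcard S hSG]
        omega
      · rwa [Finset.sdiff_sdiff_eq_self hsub]
    · intro T hT
      obtain ⟨hT1, -, hT2⟩ := memB.mp hT
      refine Finset.mem_filter.mpr ⟨hT2, ?_, fun x hx => ?_⟩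
      · simp only [Finset.mem_sdiff, Finset.mem_range]
        exact ⟨by omega, fun h => (hT1 _ h).false⟩
      · have := Finset.mem_range.mp (Finset.mem_sdiff.mp hx).1
        omega
    · intro S hS
      obtain ⟨-, -, hmax⟩ := Finset.mem_filter.mp hS
      exact Finset.sdiff_sdiff_eq_self fun x hx => by
        have := hmax x hx
        exact Finset.mem_range.mpr (by omega)
    · intro T hT
      exact Finset.sdiff_sdiff_eq_self fun x hx => by
        have := (memB.mp hT).1 x hx
        exact Finset.mem_range.mpr (by omega)
  have hraise : ∀ k, RaiseClosed (k + e) (B k) := by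
    intro k T hT p hp q hpq hq hqT
    obtain ⟨h1, h2, h3⟩ := memB.mp hT
    refine memB.mpr ⟨fun x hx => ?_, ?_, ?_⟩
    · rcases Finset.mem_insert.mp hx with rfl | hx
      · exact hq
      · exact h1 x (Finset.mem_of_mem_erase hx)
    · rw [Finset.card_insert_of_notMem (fun h => hqT (Finset.mem_of_mem_erase h)),
        Finset.card_erase_add_one hp, h2]
    · have := hc _ h3 p q hpq
        (by simp only [Finset.mem_sdiff, Finset.mem_range]; exact ⟨by omega, hqT⟩)
        (by simp [hp])
      convert this using 1
      ext x
      have hpe := h1 p hp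
      simp only [Finset.mem_sdiff, Finset.mem_range, Finset.mem_insert, Finset.mem_erase]
      by_cases hxp : x = p
      · subst hxp
        simp only [ne_eq, not_true_eq_false, false_and, or_false, true_or, iff_true]
        omega
      · tauto
  have hext : ∀ k, B (k + 1) ⊆ maxExt (k + e) (B k) := by
    intro k T hT
    obtain ⟨h1, h2, h3⟩ := memB.mp hT
    have hne : T.Nonempty := Finset.card_pos.mp (by omega)
    have hx := T.max'_mem hne
    have hmax : ∀ y ∈ T, y ≤ T.max' hne := fun y hy => T.le_max' y hy
    set x := T.max' hne
    have hxk := h1 x hx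
    refine mem_maxExt.mpr ⟨fun y hy => by have := h1 y hy; omega, x, hx, hmax,
      memB.mpr ⟨fun y hy => ?_, ?_, ?_⟩⟩
    · have h4 := hmax y (Finset.mem_of_mem_erase hy)
      have h5 := Finset.ne_of_mem_erase hy
      omega
    · rw [Finset.card_erase_of_mem hx, h2]
      rfl
    · have := hc _ h3 x (k + 1 + e) hxk
        (by
          simp only [Finset.mem_sdiff, Finset.mem_range]
          exact ⟨by omega, fun h => (h1 _ h).false⟩)
        (by simp [hx])
      convert this using 1
      ext y
      simp only [Finset.mem_sdiff, Finset.mem_range, Finset.mem_insert, Finset.mem_erase]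
      by_cases hyx : y = x
      · simp only [hyx, ne_eq, not_true_eq_false, false_and, not_false_eq_true, and_true, true_or,
          iff_true]
        omega
      · simp only [hyx, ne_eq, not_false_eq_true, true_and, false_or, ← and_assoc]
        refine and_congr_left fun _ => ?_
        omega
  have hBne : ∀ k, (B k).Nonempty → (B 0).Nonempty := by
    intro k
    induction k with
    | zero => exact id
    | succ k ih =>
      rintro ⟨T, hT⟩
      obtain ⟨-, x, -, -, h⟩ := mem_maxExt.mp (hext k hT)
      exact ih ⟨_, h⟩
  have hB0 : (B 0).card = 1 := by
    refine le_antisymm ((Finset.card_le_card (hBsub 0)).trans (by simp)) ?_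
    rw [Nat.one_le_iff_ne_zero, ← Nat.pos_iff_ne_zero, Finset.card_pos]
    obtain ⟨S, hS⟩ := hne
    have hSne : S.Nonempty := Finset.card_pos.mp (by rw [hGcard S hS]; omega)
    have hx := S.max'_mem hSne
    have hmax : ∀ y ∈ S, y ≤ S.max' hSne := fun y hy => S.le_max' y hy
    set x := S.max' hSne
    have hxe : e ≤ x := by
      have h1 : S ⊆ Finset.range (x + 1) := fun y hy => by
        have := hmax y hy
        exact Finset.mem_range.mpr (by omega)
      have h2 := Finset.card_le_card h1
      rw [hGcard S hS, Finset.card_range] at h2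
      omega
    refine hBne (x - e) (Finset.card_pos.mp ?_)
    rw [← hBcard, Finset.card_pos, Nat.sub_add_cancel hxe]
    exact ⟨S, Finset.mem_filter.mpr ⟨hS, hx, hmax⟩⟩
  refine ⟨⟨fun h0 => ?_, fun t ht h1 h2 => ?_⟩, fun h2 => ?_⟩
  · rw [← hℓ ⟨0, h0⟩, hBcard, hB0]
  · rw [← hℓ ⟨t, h1⟩, ← hℓ ⟨t + 1, h2⟩, hBcard, hBcard]
    obtain ⟨t, rfl⟩ := Nat.exists_eq_add_of_le' ht
    exact (Finset.card_le_card (hext (t + 1))).trans (card_maxExt_le (hBsub _) (hraise _))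
  · rw [← hℓ ⟨1, h2⟩, hBcard]
    refine (Finset.card_le_card (hBsub 1)).trans ?_
    rw [Finset.card_powersetCard, Finset.card_range, Nat.choose_one_right]
    omega

theorem exists_lowerClosed {n e : ℕ} (hn : 0 < n) {ℓ : Fin n → ℕ} (hℓ : MVector ℓ)
    (h1 : ∀ h2 : 1 < n, ℓ ⟨1, h2⟩ ≤ e + 1) :
    ∃ G : Finset (Finset ℕ), G.Nonempty ∧
      G ⊆ Finset.powersetCard (e + 1) (Finset.range (n + e)) ∧ LowerClosed G ∧
      ∀ k : Fin n, (maxSlice G (k + e)).card = ℓ k := by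
  have hchoose : ∀ t (h : t < n), ℓ ⟨t, h⟩ ≤ Nat.choose (t + e) t := by
    intro t
    induction t with
    | zero =>
      intro h
      simp [hℓ.1 h]
    | succ t ih =>
      intro h
      cases t with
      | zero =>
        have := h1 h
        simp only [zero_add, Nat.choose_one_right]
        omega
      | succ t =>
        refine (hℓ.2 (t + 1) (by omega) (by omega) h).trans ?_
        refine ((macUp_strictMono t).monotone (ih (by omega))).trans ?_
        rw [macUp_choose]
        exact le_of_eq (by congr 1; omega)
  let G : Finset (Finset ℕ) :=
    (Finset.powersetCard (e + 1) (Finset.range (n + e))).filter fun S =>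
      ∃ k : Fin n, ((k : ℕ) + e ∈ S ∧ ∀ x ∈ S, x ≤ (k : ℕ) + e) ∧ cns (gaps (k + e) S) < ℓ k
  have memG : ∀ {S}, S ∈ G ↔ S.card = e + 1 ∧
      ∃ k : Fin n, ((k : ℕ) + e ∈ S ∧ ∀ x ∈ S, x ≤ (k : ℕ) + e) ∧ cns (gaps (k + e) S) < ℓ k := by
    intro S
    simp only [G, Finset.mem_filter, Finset.mem_powersetCard]
    constructor
    · exact fun h => ⟨h.1.2, h.2⟩
    · rintro ⟨hS, k, hk, hk'⟩
      refine ⟨⟨fun x hx => ?_, hS⟩, k, hk, hk'⟩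
      have h1 := hk.2 x hx
      have h2 := k.isLt
      exact Finset.mem_range.mpr (by omega)
  have hgcard : ∀ {S : Finset ℕ} {M : ℕ}, S.card = e + 1 → M ∈ S → (∀ x ∈ S, x ≤ M) →
      (gaps M S).card + e = M := by
    intro S M hS hM hmax
    rw [← gaps_erase le_rfl]
    have h2 := card_gaps (M := M) (T := S.erase M) fun x hx => by
      have h3 := hmax x (Finset.mem_of_mem_erase hx)
      have h4 := Finset.ne_of_mem_erase hx
      omega
    rw [Finset.card_erase_of_mem hM, hS] at h2
    omega
  have hslice : ∀ k : Fin n, (maxSlice G (k + e)).card = ℓ k := by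
    intro k
    rw [← card_cns_lt (hchoose k k.isLt)]
    refine Finset.card_nbij' (fun S => gaps (k + e) S)
      (fun T => insert (k + e : ℕ) (gaps (k + e) T)) ?_ ?_ ?_ ?_
    · intro S hS
      obtain ⟨hSG, hM, hmax⟩ := Finset.mem_filter.mp hS
      obtain ⟨hScard, k', ⟨hM', hmax'⟩, hcns⟩ := memG.mp hSG
      have hkk : k' = k := by
        have h1 := hmax _ hM'
        have h2 := hmax' _ hM
        ext
        omega
      subst hkk
      have hg : (gaps (k' + e) S).card = k' := by
        have := hgcard hScard hM hmax
        omega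
      exact Finset.mem_filter.mpr
        ⟨Finset.mem_powersetCard.mpr ⟨Finset.filter_subset _ _, hg⟩, hcns⟩
    · intro T hT
      obtain ⟨hT1, hT2⟩ := Finset.mem_filter.mp hT
      obtain ⟨hT3, hT4⟩ := Finset.mem_powersetCard.mp hT1
      have hTlt : ∀ x ∈ T, x < k + e := fun x hx => Finset.mem_range.mp (hT3 hx)
      have hmem : (k + e : ℕ) ∈ insert (k + e : ℕ) (gaps (k + e) T) ∧
          ∀ x ∈ insert (k + e : ℕ) (gaps (k + e) T), x ≤ k + e := by
        refine ⟨Finset.mem_insert_self _ _, fun x hx => ?_⟩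
        rcases Finset.mem_insert.mp hx with rfl | hx
        · exact le_rfl
        · exact (mem_gaps.mp hx).1.le
      refine Finset.mem_filter.mpr ⟨memG.mpr ⟨?_, k, hmem, ?_⟩, hmem⟩
      · rw [Finset.card_insert_of_notMem fun h => (mem_gaps.mp h).1.false]
        have := card_gaps hTlt
        omega
      · rwa [gaps_insert le_rfl, gaps_gaps hTlt]
    · intro S hS
      obtain ⟨-, hM, hmax⟩ := Finset.mem_filter.mp hS
      simp only
      rw [← gaps_erase (S := S) le_rfl, gaps_gaps fun x hx => ?_, Finset.insert_erase hM]
      have h3 := hmax x (Finset.mem_of_mem_erase hx)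
      have h4 := Finset.ne_of_mem_erase hx
      omega
    · intro T hT
      have hT3 := (Finset.mem_powersetCard.mp (Finset.mem_filter.mp hT).1).1
      simp only
      rw [gaps_insert le_rfl, gaps_gaps fun x hx => Finset.mem_range.mp (hT3 hx)]
  refine ⟨G, ?_, Finset.filter_subset _ _, lowerClosed_of_adjacent fun S hS p hp1 hp0 => ?_, hslice⟩
  · have h0 : (maxSlice G (0 + e)).card = 1 := (hslice ⟨0, hn⟩).trans (hℓ.1 hn)
    obtain ⟨S, hS⟩ := Finset.card_pos.mp (by rw [h0]; exact Nat.one_pos)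
    exact ⟨S, (Finset.mem_filter.mp hS).1⟩
  · obtain ⟨hScard, ⟨k, hk⟩, ⟨hM, hmax⟩, hcns⟩ := memG.mp hS
    simp only at hM hmax hcns
    refine memG.mpr ⟨?_, ?_⟩
    · rw [Finset.card_insert_of_notMem (by simp [hp0]), Finset.card_erase_add_one hp1, hScard]
    have hpM := hmax _ hp1
    rcases hpM.lt_or_eq with hlt | heq
    · refine ⟨⟨k, hk⟩, ⟨?_, fun x hx => ?_⟩, (cns_gaps_lower_le hlt hp1 hp0).trans_lt hcns⟩
      · simp only [Finset.mem_insert, Finset.mem_erase]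
        exact Or.inr ⟨by omega, hM⟩
      · rcases Finset.mem_insert.mp hx with rfl | hx
        · simp only
          omega
        · exact hmax x (Finset.mem_of_mem_erase hx)
    · have hg := hgcard hScard hM hmax
      have hk0 : k ≠ 0 := by
        rintro rfl
        have h0 : gaps (0 + e) S = ∅ := Finset.card_eq_zero.mp (by omega)
        have : 0 ∈ gaps (0 + e) S := by
          rw [mem_gaps, ← heq]
          exact ⟨by omega, hp0⟩
        rw [h0] at this
        simp at this
      obtain ⟨k, rfl⟩ := Nat.exists_eq_succ_of_ne_zero hk0
      have hpk : p = k + e := by omega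
      subst hpk
      refine ⟨⟨k, by omega⟩, ⟨Finset.mem_insert_self _ _, fun x hx => ?_⟩, ?_⟩
      · rcases Finset.mem_insert.mp hx with rfl | hx
        · exact le_rfl
        · have h3 := hmax x (Finset.mem_of_mem_erase hx)
          have h4 := Finset.ne_of_mem_erase hx
          simp only
          omega
      · simp only
        rw [gaps_insert le_rfl, gaps_erase (by omega)]
        rw [show k.succ + e = k + e + 1 by omega] at hcns hg
        rw [gaps_succ hp0] at hcns hg
        rw [cns_insert_zero_image_succ] at hcns
        rw [Finset.card_insert_of_notMem (by simp),
          Finset.card_image_of_injective _ Nat.succ_injective] at hg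
        rw [show (gaps (k + e) S).card = k by omega] at hcns
        cases k with
        | zero =>
          have h0 : gaps (0 + e) S = ∅ := Finset.card_eq_zero.mp (by omega)
          rw [h0]
          simp [cns, hℓ.1]
        | succ k =>
          exact (macUp_strictMono k).lt_iff_lt.mp
            (hcns.trans_le (hℓ.2 (k + 1) (by omega) (by omega) hk))

/-! ### Squarefree monomials as finite sets -/

/-- the set of (0-indexed) variables dividing `u` -/
def varSet {N : ℕ} (u : Mono N) : Finset ℕ := u.support.map Fin.valEmbedding

theorem mem_varSet {N : ℕ} {u : Mono N} {x : ℕ} :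
    x ∈ varSet u ↔ ∃ i : Fin N, u i ≠ 0 ∧ (i : ℕ) = x := by
  simp [varSet]

theorem coe_mem_varSet {N : ℕ} {u : Mono N} {i : Fin N} : (i : ℕ) ∈ varSet u ↔ u i ≠ 0 := by
  rw [mem_varSet]
  constructor
  · rintro ⟨j, hj, hji⟩
    rwa [← Fin.ext hji]
  · exact fun h => ⟨i, h, rfl⟩

/-- the product of the variables with (0-indexed) index in `S` -/
noncomputable def setMono (N : ℕ) (S : Finset ℕ) : Mono N :=
  Finsupp.equivFunOnFinite.symm fun i => if (i : ℕ) ∈ S then 1 else 0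

theorem setMono_apply {N : ℕ} {S : Finset ℕ} {i : Fin N} :
    setMono N S i = if (i : ℕ) ∈ S then 1 else 0 := rfl

theorem sqFree_setMono (N : ℕ) (S : Finset ℕ) : SqFree (setMono N S) := by
  intro i
  rw [setMono_apply]
  split_ifs <;> omega

theorem varSet_setMono {N : ℕ} {S : Finset ℕ} (hS : ∀ x ∈ S, x < N) :
    varSet (setMono N S) = S := by
  ext x
  rw [mem_varSet]
  constructor
  · rintro ⟨i, hi, rfl⟩
    by_contra h
    exact hi (if_neg h)
  · intro hx
    refine ⟨⟨x, hS x hx⟩, ?_, rfl⟩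
    rw [setMono_apply, if_pos hx]
    exact one_ne_zero

theorem SqFree.setMono_varSet {N : ℕ} {u : Mono N} (hu : SqFree u) :
    setMono N (varSet u) = u := by
  ext i
  have := hu i
  rw [setMono_apply]
  split_ifs with h <;> rw [coe_mem_varSet] at h <;> omega

theorem SqFree.mdeg_eq_card {N : ℕ} {u : Mono N} (hu : SqFree u) :
    mdeg u = (varSet u).card := by
  rw [varSet, Finset.card_map, Finset.card_eq_sum_ones]
  refine Finset.sum_congr rfl fun i hi => ?_
  exact le_antisymm (hu i) (Nat.one_le_iff_ne_zero.mpr (Finsupp.mem_support_iff.mp hi))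

theorem maxVar_eq_succ_iff {N m : ℕ} {u : Mono N} :
    maxVar u = m + 1 ↔ m ∈ varSet u ∧ ∀ x ∈ varSet u, x ≤ m := by
  constructor
  · intro h
    have hle : ∀ x ∈ varSet u, x ≤ m := by
      intro x hx
      obtain ⟨i, hi, rfl⟩ := mem_varSet.mp hx
      have : (i : ℕ) + 1 ≤ maxVar u :=
        Finset.le_sup (f := fun i : Fin N => (i : ℕ) + 1) (Finsupp.mem_support_iff.mpr hi)
      omega
    refine ⟨?_, hle⟩
    by_contra hm
    have : maxVar u ≤ m := by
      refine Finset.sup_le fun i hi => ?_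
      have hi' := coe_mem_varSet.mpr (Finsupp.mem_support_iff.mp hi)
      exact (hle _ hi').lt_of_ne fun h => hm (h ▸ hi')
    omega
  · rintro ⟨hm, hle⟩
    obtain ⟨i, hi, rfl⟩ := mem_varSet.mp hm
    refine le_antisymm (Finset.sup_le fun j hj => ?_)
      (Finset.le_sup (f := fun i : Fin N => (i : ℕ) + 1) (Finsupp.mem_support_iff.mpr hi))
    exact Nat.succ_le_succ (hle _ (coe_mem_varSet.mpr (Finsupp.mem_support_iff.mp hj)))

theorem tsub_single_add_single_apply {N : ℕ} (u : Mono N) {p q : Fin N} (hpq : p ≠ q)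
    (i : Fin N) : (u - Finsupp.single q 1 + Finsupp.single p 1 : Mono N) i =
      if i = p then u p + 1 else if i = q then u q - 1 else u i := by
  rw [Finsupp.add_apply, Finsupp.tsub_apply, Finsupp.single_apply, Finsupp.single_apply]
  by_cases hip : i = p
  · subst hip
    simp [hpq.symm]
  · by_cases hiq : i = q
    · subst hiq
      simp [hpq, hip]
    · simp [Ne.symm hip, Ne.symm hiq, hip, hiq]

theorem setMono_move {N : ℕ} {S : Finset ℕ} {p q : Fin N} (hpq : p ≠ q) (hq : (q : ℕ) ∈ S)
    (hp : (p : ℕ) ∉ S) :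
    setMono N S - Finsupp.single q 1 + Finsupp.single p 1 =
      setMono N (insert (p : ℕ) (S.erase q)) := by
  ext i
  rw [tsub_single_add_single_apply _ hpq]
  simp only [setMono_apply, Finset.mem_insert, Finset.mem_erase, hp, hq]
  by_cases hip : i = p
  · simp [hip]
  · by_cases hiq : i = q
    · simp [hiq, hpq.symm, Fin.val_inj]
    · simp [hip, hiq, Fin.val_inj]

theorem mdeg_le_mdeg {N : ℕ} {u v : Mono N} (h : v ≤ u) : mdeg v ≤ mdeg u := by
  rw [mdeg, mdeg, Finsupp.sum_fintype _ _ fun _ => rfl, Finsupp.sum_fintype _ _ fun _ => rfl]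
  exact Finset.sum_le_sum fun i _ => h i

theorem eq_of_le_of_mdeg_eq {N : ℕ} {u v : Mono N} (h : v ≤ u) (hd : mdeg v = mdeg u) :
    v = u := by
  rw [mdeg, mdeg, Finsupp.sum_fintype _ _ fun _ => rfl,
    Finsupp.sum_fintype _ _ fun _ => rfl] at hd
  ext i
  exact (Finset.sum_eq_sum_iff_of_le fun i _ => h i).mp hd i (Finset.mem_univ i)

theorem exists_minGen_le {N : ℕ} {K : Type} [Field K] {I : Ideal (MvPolynomial (Fin N) K)}
    {u : Mono N} (hu : monomial u (1 : K) ∈ I) : ∃ v ≤ u, MinGen I v := by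
  induction u using WellFoundedLT.induction with
  | _ u ih =>
    by_cases h : MinGen I u
    · exact ⟨u, le_rfl, h⟩
    · obtain ⟨v, hvu, hne, hv⟩ : ∃ v ≤ u, v ≠ u ∧ monomial v (1 : K) ∈ I := by
        by_contra! hcon
        exact h ⟨hu, hcon⟩
      obtain ⟨w, hwv, hw⟩ := ih v (lt_of_le_of_ne hvu hne) hv
      exact ⟨w, hwv.trans hvu, hw⟩

theorem card_filter_maxVar {N m : ℕ} {G : Finset (Mono N)} (hG : ∀ u ∈ G, SqFree u) :
    (G.filter fun u => maxVar u = m + 1).card = (maxSlice (G.image varSet) m).card := by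
  rw [maxSlice, Finset.filter_image, Finset.card_image_of_injOn]
  · exact congrArg Finset.card (Finset.filter_congr fun u _ => maxVar_eq_succ_iff)
  · intro u hu v hv huv
    rw [← (hG u (Finset.mem_filter.mp hu).1).setMono_varSet,
      ← (hG v (Finset.mem_filter.mp hv).1).setMono_varSet]
    exact congrArg _ huv

section SquarefreeStable

variable {N e : ℕ} {K : Type} [Field K]

theorem lowerClosed_image_varSet {I : Ideal (MvPolynomial (Fin N) K)} {G : Finset (Mono N)}
    (hI : SqSStableIdeal I) (hG : ∀ u, u ∈ G ↔ MinGen I u) (hdeg : ∀ u ∈ G, mdeg u = e) :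
    LowerClosed (G.image varSet) := by
  intro S hS p' q' hpq hq hp
  obtain ⟨u, huG, rfl⟩ := Finset.mem_image.mp hS
  obtain ⟨q, hq0, rfl⟩ := mem_varSet.mp hq
  obtain ⟨p, rfl⟩ : ∃ p : Fin N, (p : ℕ) = p' := ⟨⟨p', hpq.trans q.isLt⟩, rfl⟩
  have huM := (hG u).mp huG
  have husq := hI.1.2 u huM
  have hmem : monomial (setMono N (insert (p : ℕ) ((varSet u).erase q))) (1 : K) ∈ I := by
    rw [← setMono_move (Fin.ne_of_lt hpq) hq hp, husq.setMono_varSet]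
    refine hI.2 u husq huM.1 p q hpq ?_ ?_
    · have := husq q
      omega
    · simpa [coe_mem_varSet] using hp
  obtain ⟨v, hv, hvM⟩ := exists_minGen_le hmem
  have hlt : ∀ x ∈ insert (p : ℕ) ((varSet u).erase q), x < N := by
    intro x hx
    rcases Finset.mem_insert.mp hx with rfl | hx
    · exact p.isLt
    · obtain ⟨i, -, rfl⟩ := mem_varSet.mp (Finset.mem_of_mem_erase hx)
      exact i.isLt
  refine Finset.mem_image.mpr ⟨v, (hG v).mpr hvM, ?_⟩
  rw [eq_of_le_of_mdeg_eq hv, varSet_setMono hlt]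
  rw [hdeg v ((hG v).mpr hvM), (sqFree_setMono _ _).mdeg_eq_card, varSet_setMono hlt,
    Finset.card_insert_of_notMem (by simp [hp]), Finset.card_erase_add_one hq,
    ← husq.mdeg_eq_card, hdeg u huG]

variable (N K) in
/-- the ideal generated by the squarefree monomials attached to the members of `G` -/
noncomputable def setIdeal (G : Finset (Finset ℕ)) : Ideal (MvPolynomial (Fin N) K) :=
  Ideal.span ((fun u => monomial u (1 : K)) '' (setMono N '' (G : Set (Finset ℕ))))

theorem monomial_mem_setIdeal {G : Finset (Finset ℕ)} {u : Mono N} :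
    monomial u (1 : K) ∈ setIdeal N K G ↔ ∃ S ∈ G, setMono N S ≤ u := by
  classical
  rw [setIdeal, mem_ideal_span_monomial_image, support_monomial, if_neg one_ne_zero]
  simp

theorem monomialIdeal_setIdeal (G : Finset (Finset ℕ)) : MonomialIdeal (setIdeal N K G) := by
  intro f hf m hm
  obtain ⟨v, ⟨S, hS, rfl⟩, hle⟩ := mem_ideal_span_monomial_image.mp hf m hm
  exact monomial_mem_setIdeal.mpr ⟨S, hS, hle⟩

theorem minGen_setIdeal_iff {G : Finset (Finset ℕ)} (hG : ∀ S ∈ G, mdeg (setMono N S) = e)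
    {u : Mono N} : MinGen (setIdeal N K G) u ↔ u ∈ G.image (setMono N) := by
  constructor
  · rintro ⟨hu, hmin⟩
    obtain ⟨S, hS, hle⟩ := monomial_mem_setIdeal.mp hu
    by_contra hne
    refine hmin _ hle (fun h => hne (Finset.mem_image.mpr ⟨S, hS, h⟩)) ?_
    exact monomial_mem_setIdeal.mpr ⟨S, hS, le_rfl⟩
  · intro hu
    obtain ⟨S, hS, rfl⟩ := Finset.mem_image.mp hu
    refine ⟨monomial_mem_setIdeal.mpr ⟨S, hS, le_rfl⟩, fun v hv hne hmem => hne ?_⟩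
    obtain ⟨T, hT, hle⟩ := monomial_mem_setIdeal.mp hmem
    refine eq_of_le_of_mdeg_eq hv (le_antisymm (mdeg_le_mdeg hv) ?_)
    rw [hG S hS, ← hG T hT]
    exact mdeg_le_mdeg hle

theorem sqSStableIdeal_setIdeal {G : Finset (Finset ℕ)}
    (hG : ∀ S ∈ G, mdeg (setMono N S) = e) (hc : LowerClosed G) :
    SqSStableIdeal (setIdeal N K G) := by
  refine ⟨⟨monomialIdeal_setIdeal G, fun u hu => ?_⟩, fun u _ hu p q hpq hq hp => ?_⟩
  · obtain ⟨S, -, rfl⟩ := Finset.mem_image.mp ((minGen_setIdeal_iff hG).mp hu)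
    exact sqFree_setMono N S
  · obtain ⟨S, hS, hle⟩ := monomial_mem_setIdeal.mp hu
    have hpS : (p : ℕ) ∉ S := by
      intro h
      have := hle p
      rw [setMono_apply, if_pos h] at this
      omega
    rw [monomial_mem_setIdeal]
    by_cases hqS : (q : ℕ) ∈ S
    · refine ⟨_, hc S hS p q hpq hqS hpS, ?_⟩
      rw [← setMono_move hpq.ne hqS hpS]
      gcongr
    · refine ⟨S, hS, fun i => ?_⟩
      have := hle i
      rw [tsub_single_add_single_apply _ hpq.ne]
      split_ifs with hip hiq
      · subst hip
        omega
      · subst hiq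
        simp [setMono_apply, hqS]
      · exact this

end SquarefreeStable

/-- characterization of `ℓ*`-sequences of nonzero squarefree strongly
stable ideals generated in degree `d`: exactly the M-vectors with `ℓ_2 ≤ d`. -/
theorem stmt18 (n d : ℕ) (hn : 0 < n) (hd : 0 < d) (K : Type) [Field K]
    (ℓ : Fin n → ℕ) :
    (∃ (I : Ideal (MvPolynomial (Fin (n + d - 1)) K)) (G : Finset (Mono (n + d - 1))),
        I ≠ ⊥ ∧ SqSStableIdeal I ∧ (∀ u, u ∈ G ↔ MinGen I u) ∧
        (∀ u ∈ G, mdeg u = d) ∧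
        ∀ k : Fin n, (G.filter fun u => maxVar u = (k : ℕ) + d).card = ℓ k) ↔
    (MVector ℓ ∧ ∀ h2 : 1 < n, ℓ ⟨1, h2⟩ ≤ d) := by
  obtain ⟨e, rfl⟩ := Nat.exists_eq_succ_of_ne_zero hd.ne'
  constructor
  · rintro ⟨I, G, hne, hI, hG, hdeg, hℓ⟩
    have hsq : ∀ u ∈ G, SqFree u := fun u hu => hI.1.2 u ((hG u).mp hu)
    refine mVector_of_lowerClosed (G := G.image varSet) ?_ (fun S hS => ?_)
      (lowerClosed_image_varSet hI hG hdeg) fun k => ?_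
    · obtain ⟨f, hf, hf0⟩ := Submodule.exists_mem_ne_zero_of_ne_bot hne
      obtain ⟨m, hm⟩ := Finset.nonempty_iff_ne_empty.mpr fun h => hf0 (support_eq_empty.mp h)
      obtain ⟨v, -, hv⟩ := exists_minGen_le (hI.1.1 f hf m hm)
      exact ⟨_, Finset.mem_image_of_mem _ ((hG v).mpr hv)⟩
    · obtain ⟨u, hu, rfl⟩ := Finset.mem_image.mp hS
      refine Finset.mem_powersetCard.mpr ⟨fun x hx => ?_, ?_⟩
      · obtain ⟨i, -, rfl⟩ := mem_varSet.mp hx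
        exact Finset.mem_range.mpr i.isLt
      · rw [← (hsq u hu).mdeg_eq_card, hdeg u hu]
    · rw [← hℓ k]
      exact (card_filter_maxVar hsq).symm
  · rintro ⟨hM, h1⟩
    obtain ⟨G, hne, hG, hc, hℓ⟩ := exists_lowerClosed hn hM h1
    have hlt : ∀ S ∈ G, ∀ x ∈ S, x < n + e := fun S hS x hx =>
      Finset.mem_range.mp ((Finset.mem_powersetCard.mp (hG hS)).1 hx)
    have hdeg : ∀ S ∈ G, mdeg (setMono (n + e) S) = e + 1 := fun S hS => by
      rw [(sqFree_setMono _ _).mdeg_eq_card, varSet_setMono (hlt S hS)]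
      exact (Finset.mem_powersetCard.mp (hG hS)).2
    refine ⟨setIdeal (n + e) K G, G.image (setMono (n + e)), fun hbot => ?_,
      sqSStableIdeal_setIdeal hdeg hc, fun u => (minGen_setIdeal_iff hdeg).symm,
      fun u hu => ?_, fun k => ?_⟩
    · obtain ⟨S, hS⟩ := hne
      have hmem : monomial (setMono (n + e) S) (1 : K) ∈ setIdeal (n + e) K G :=
        monomial_mem_setIdeal.mpr ⟨S, hS, le_rfl⟩
      rw [hbot] at hmem
      exact one_ne_zero (monomial_eq_zero.mp (Ideal.mem_bot.mp hmem))
    · obtain ⟨S, hS, rfl⟩ := Finset.mem_image.mp hu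
      exact hdeg S hS
    · rw [← hℓ k]
      refine (card_filter_maxVar (m := k + e) fun u hu => ?_).trans ?_
      · obtain ⟨S, -, rfl⟩ := Finset.mem_image.mp hu
        exact sqFree_setMono _ S
      · rw [Finset.image_image]
        congr 2
        exact (Finset.image_congr fun S hS => varSet_setMono (hlt S hS)).trans Finset.image_id

end Paper
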